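/- For every superlinear function g : ℕ → ℕ and every α ≥ 1, there exist η, γ' ∈ (0,1) such that for the subtractive adversary V_{sub,η} the following holds: for every m ≥ 1 there exist a distribution p ∈ C_g and a meta-distribution Q over C_g such that (i) d_TV(p,q) ≥ 4α·η + 4γ' for every q in the support of Q, and (ii) d_TV(V_{sub,η}(p^m), V_{sub,η}(|Q|^m)) ≤ 1/8. -/

import Mathlib

open scoped ENNReal NNReal

/-- Total variation distance between two discrete distributions. -/
noncomputable def tv {X : Type*} (p q : PMF X) : ℝ :=
  (∑' x, |(p x).toReal - (q x).toReal|) / 2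

/-- The distribution of an i.i.d. sample of size `m` from `p`, viewed as a multiset. -/
noncomputable def iid {X : Type*} (p : PMF X) : ℕ → PMF (Multiset X)
  | 0 => PMF.pure 0
  | n + 1 => (iid p n).bind fun s => p.map fun x => x ::ₘ s

/-- `|Q|^m` : first draw `q ∼ Q`, then an i.i.d. sample `S ∼ q^m`. -/
noncomputable def metaSample {X : Type*} (Q : PMF (PMF X)) (m : ℕ) : PMF (Multiset X) :=
  Q.bind fun q => iid q m

/-- An adaptive adversary: a randomized map from samples (finite multisets) to samples. -/
abbrev Adversary (X : Type*) := Multiset X → PMF (Multiset X)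

/-- `V(P)`: the distribution of `V S` for `S ∼ P` (including internal randomness). -/
noncomputable def advPush {X : Type*} (V : Adversary X) (P : PMF (Multiset X)) :
    PMF (Multiset X) := P.bind V

/-- An additive adversary only adds points: `S ⊆ V(S)` almost surely. -/
def IsAdditive {X : Type*} (V : Adversary X) : Prop :=
  ∀ S T, T ∈ (V S).support → S ≤ T

/-- A subtractive adversary only removes points: `V(S) ⊆ S` almost surely. -/
def IsSubtractive {X : Type*} (V : Adversary X) : Prop :=
  ∀ S T, T ∈ (V S).support → T ≤ S

/-- Fixed constant budget `η`: `|V(S)|` depends only on `|S|` (via `c`), and for every `m`,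
`η m − 1 < m·budget(V,m) ≤ η m` where `m·budget(V,m) = ||V(S)| − |S||`. -/
def FixedBudget {X : Type*} (V : Adversary X) (η : ℝ) : Prop :=
  ∃ c : ℕ → ℕ, (∀ S T, T ∈ (V S).support → Multiset.card T = c (Multiset.card S)) ∧
    ∀ m : ℕ, η * m - 1 < |(c m : ℝ) - m| ∧ |(c m : ℝ) - m| ≤ η * m

/-- Fixed constant budget `η` for an additive adversary (`m·budget(V,m) = |V(S)| − |S|`). -/
def FixedBudgetAdd {X : Type*} (V : Adversary X) (η : ℝ) : Prop :=
  ∃ c : ℕ → ℕ, (∀ S T, T ∈ (V S).support → Multiset.card T = c (Multiset.card S)) ∧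
    ∀ m : ℕ, η * m - 1 < (c m : ℝ) - m ∧ (c m : ℝ) - m ≤ η * m

/-- Fixed constant budget `η` for a subtractive adversary (`m·budget(V,m) = |S| − |V(S)|`). -/
def FixedBudgetSub {X : Type*} (V : Adversary X) (η : ℝ) : Prop :=
  ∃ c : ℕ → ℕ, (∀ S T, T ∈ (V S).support → Multiset.card T = c (Multiset.card S)) ∧
    ∀ m : ℕ, η * m - 1 < (m : ℝ) - c m ∧ (m : ℝ) - c m ≤ η * m

/-- Probability of an event under a discrete distribution. -/
noncomputable def probEvent {β : Type*} (P : PMF β) (E : Set β) : ℝ≥0∞ :=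
  P.toOuterMeasure E

/-- `A` with sample complexity `mc` learns the class `C` against adversary `V`,
up to error `bound + ε` with confidence `1 − δ` once `m ≥ mc ε δ`. -/
def RobustLearnerFor {X : Type*} (C : Set (PMF X)) (A : Multiset X → PMF X)
    (mc : ℝ → ℝ → ℕ) (V : Adversary X) (bound : ℝ) : Prop :=
  ∀ p ∈ C, ∀ ε δ : ℝ, 0 < ε → ε < 1 → 0 < δ → δ < 1 →
    ∀ m : ℕ, mc ε δ ≤ m →
      1 - ENNReal.ofReal δ ≤
        probEvent ((iid p m).bind V) {T | tv (A T) p ≤ bound + ε}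

/-- `C` is adaptively α-robustly learnable w.r.t. the single adversary `V` with budget `η`. -/
def RobustlyLearnableWrt {X : Type*} (C : Set (PMF X)) (α : ℝ)
    (V : Adversary X) (η : ℝ) : Prop :=
  ∃ A mc, RobustLearnerFor C A mc V (α * η)

/-- `V` (with budget `η`) is a universal α-adversary for `C`. -/
def UniversalAdversary {X : Type*} (C : Set (PMF X)) (α : ℝ)
    (V : Adversary X) (η : ℝ) : Prop :=
  ¬ RobustlyLearnableWrt C α V η

/-- `C` is adaptively α-robustly learnable w.r.t. a class `𝒱` of adversaries
(each given with its budget). -/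
def RobustlyLearnableWrtClass {X : Type*} (C : Set (PMF X)) (α : ℝ)
    (𝒱 : Set (Adversary X × ℝ)) : Prop :=
  ∃ A mc, ∀ Vη ∈ 𝒱, RobustLearnerFor C A mc Vη.1 (α * Vη.2)

/-- `C` is adaptively additively α-robustly learnable: one learner works simultaneously
against all additive adaptive adversaries with fixed constant budgets. -/
def AdditivelyRobustlyLearnable {X : Type*} (C : Set (PMF X)) (α : ℝ) : Prop :=
  ∃ A mc, ∀ V : Adversary X, ∀ η : ℝ, 0 < η → η < 1 →
    IsAdditive V → FixedBudgetAdd V η → RobustLearnerFor C A mc V (α * η)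

/-- `C` is adaptively subtractively α-robustly learnable. -/
def SubtractivelyRobustlyLearnable {X : Type*} (C : Set (PMF X)) (α : ℝ) : Prop :=
  ∃ A mc, ∀ V : Adversary X, ∀ η : ℝ, 0 < η → η < 1 →
    IsSubtractive V → FixedBudgetSub V η → RobustLearnerFor C A mc V (α * η)

/-- The pair `(V1, V2)` successfully `(γ,ζ)`-confuses `C`-generated samples of size `m`. -/
def ConfusesPair {X : Type*} (C : Set (PMF X)) (V1 V2 : Adversary X)
    (γ ζ : ℝ) (m : ℕ) : Prop :=
  ∃ p ∈ C, ∃ Q : PMF (PMF X), Q.support ⊆ C ∧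
    (∀ q ∈ Q.support, γ < tv p q) ∧
    tv (advPush V1 (metaSample Q m)) (advPush V2 (iid p m)) < ζ

/-- A single adversary `V` successfully `(γ,ζ)`-confuses `C`-generated samples of size `m`. -/
def Confuses {X : Type*} (C : Set (PMF X)) (V : Adversary X) (γ ζ : ℝ) (m : ℕ) : Prop :=
  ConfusesPair C V V γ ζ m

/-- `p` is the distribution `p_{i,j,k} = (1 − 1/j)·δ_{(0,0)} + (1/j − 1/k)·U_{B_i×{2j+1}}
 + (1/k)·δ_{(i,2j+2)}` on `ℕ × ℕ`. -/
def IsPijk (B : ℕ → Finset ℕ) (i j k : ℕ) (p : PMF (ℕ × ℕ)) : Prop :=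
  ∀ x : ℕ × ℕ,
    p x = (1 - ((j : ℝ≥0∞))⁻¹) * (if x = (0, 0) then 1 else 0)
      + (((j : ℝ≥0∞))⁻¹ - ((k : ℝ≥0∞))⁻¹) *
          (if x.1 ∈ B i ∧ x.2 = 2 * j + 1 then (((B i).card : ℝ≥0∞))⁻¹ else 0)
      + ((k : ℝ≥0∞))⁻¹ * (if x = (i, 2 * j + 2) then 1 else 0)

/-- The class `C_g = {p_{i,j,g(j)} : i, j ∈ ℕ}` (for the meaningful parameters). -/
def Cg (B : ℕ → Finset ℕ) (g : ℕ → ℕ) : Set (PMF (ℕ × ℕ)) :=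
  {p | ∃ i j : ℕ, 1 ≤ j ∧ j < g j ∧ (B i).Nonempty ∧ IsPijk B i j (g j) p}

/-- `g` is superlinear: `g(n)/n → ∞`. -/
def Superlinear (g : ℕ → ℕ) : Prop :=
  Filter.Tendsto (fun n => (g n : ℝ) / n) Filter.atTop Filter.atTop

/-- The indicator part of a sample: elements `(i, 2j+2)`, i.e. second coordinate even, `≥ 2`. -/
def indS (S : Multiset (ℕ × ℕ)) : Multiset (ℕ × ℕ) :=
  S.filter (fun x => x.2 % 2 = 0 ∧ 2 ≤ x.2)

/-- The non-indicator part of a sample. -/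
def noindS (S : Multiset (ℕ × ℕ)) : Multiset (ℕ × ℕ) :=
  S.filter (fun x => ¬ (x.2 % 2 = 0 ∧ 2 ≤ x.2))

/-- The subtractive adversary `V_{sub,η}`: it removes `⌊η|S|⌋` elements, as many of them
as possible from `ind(S)`; remaining removals are uniformly random.  (Uniform choice of a
sub-multiset of prescribed size is realized via `Multiset.powersetCard`.) -/
noncomputable def Vsub (η : ℝ) : Adversary (ℕ × ℕ) := fun S =>
  let m := Multiset.card S
  let n := ⌊η * m⌋₊
  if Multiset.card (indS S) ≤ n then
    if h2 : Multiset.powersetCard (m - n) (noindS S) = 0 then PMF.pure S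
    else PMF.ofMultiset _ h2
  else
    if h2 : Multiset.powersetCard (Multiset.card (indS S) - n) (indS S) = 0 then PMF.pure S
    else (PMF.ofMultiset _ h2).map (fun T => noindS S + T)


/-- One-sided closeness of discrete distributions. -/
def CloseBy {X : Type*} (ε : ℝ≥0∞) (P P' : PMF X) : Prop :=
  ∃ e : X → ℝ≥0∞, (∀ x, P x ≤ P' x + e x) ∧ ∑' x, e x ≤ ε

lemma CloseBy.trans {X : Type*} {ε δ : ℝ≥0∞} {P P' P'' : PMF X}
    (h : CloseBy ε P P') (h' : CloseBy δ P' P'') : CloseBy (ε + δ) P P'' := by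
  obtain ⟨e, he, hs⟩ := h
  obtain ⟨d, hd, hs'⟩ := h'
  refine ⟨fun x => e x + d x, fun x => ?_, ?_⟩
  · calc P x ≤ P' x + e x := he x
      _ ≤ (P'' x + d x) + e x := by gcongr; exact hd x
      _ = _ := by ring
  · rw [ENNReal.tsum_add]
    gcongr

lemma CloseBy.bind {X Y : Type*} {ε : ℝ≥0∞} {P P' : PMF X}
    (h : CloseBy ε P P') (K : X → PMF Y) : CloseBy ε (P.bind K) (P'.bind K) := by
  obtain ⟨e, he, hs⟩ := h
  refine ⟨fun y => ∑' x, e x * K x y, fun y => ?_, ?_⟩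
  · rw [PMF.bind_apply, PMF.bind_apply, ← ENNReal.tsum_add]
    refine ENNReal.tsum_le_tsum fun x => ?_
    rw [← add_mul]
    gcongr
    exact he x
  · rw [ENNReal.tsum_comm]
    simp only [ENNReal.tsum_mul_left, PMF.tsum_coe, mul_one]
    exact hs

lemma CloseBy.bind_left {X Y : Type*} (P : PMF X) (K K' : X → PMF Y) (bad : Set X)
    (hK : ∀ x, x ∉ bad → K x = K' x) :
    CloseBy (∑' x, P x * bad.indicator 1 x) (P.bind K) (P.bind K') := by
  refine ⟨fun y => ∑' x, P x * bad.indicator 1 x * K x y, fun y => ?_, ?_⟩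
  · rw [PMF.bind_apply, PMF.bind_apply, ← ENNReal.tsum_add]
    refine ENNReal.tsum_le_tsum fun x => ?_
    by_cases hx : x ∈ bad
    · simp [hx]
    · simp [hx, hK x hx]
  · rw [ENNReal.tsum_comm]
    simp only [ENNReal.tsum_mul_left, PMF.tsum_coe, mul_one]
    exact le_rfl

lemma PMF.summable_toReal' {X : Type*} (P : PMF X) : Summable fun x => (P x).toReal :=
  ENNReal.summable_toReal P.tsum_coe_ne_top

lemma PMF.tsum_toReal' {X : Type*} (P : PMF X) : ∑' x, (P x).toReal = 1 := by
  rw [← ENNReal.tsum_toReal_eq (fun x => P.apply_ne_top x), P.tsum_coe]; rfl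

lemma CloseBy.tv_le {X : Type*} {ε : ℝ≥0∞} (hε : ε ≠ ⊤) {P P' : PMF X}
    (h : CloseBy ε P P') : tv P P' ≤ ε.toReal := by
  obtain ⟨e, he, hs⟩ := h
  have hsum : ∑' x, e x ≠ ⊤ := ne_top_of_le_ne_top hε hs
  have hfin : ∀ x, e x ≠ ⊤ := ENNReal.ne_top_of_tsum_ne_top hsum
  have hse := ENNReal.summable_toReal hsum
  have h1 := P.summable_toReal'
  have h2 := P'.summable_toReal'
  have hpt : ∀ x, |(P x).toReal - (P' x).toReal| ≤
      2 * (e x).toReal + (P' x).toReal - (P x).toReal := by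
    intro x
    have := ENNReal.toReal_mono (ENNReal.add_ne_top.2 ⟨P'.apply_ne_top x, hfin x⟩) (he x)
    rw [ENNReal.toReal_add (P'.apply_ne_top x) (hfin x)] at this
    have h0 : 0 ≤ (e x).toReal := ENNReal.toReal_nonneg
    rw [abs_le]
    constructor <;> linarith
  have hS : Summable fun x => 2 * (e x).toReal + (P' x).toReal - (P x).toReal :=
    ((hse.mul_left 2).add h2).sub h1
  have hle : ∑' x, |(P x).toReal - (P' x).toReal| ≤
      ∑' x, (2 * (e x).toReal + (P' x).toReal - (P x).toReal) :=
    (h1.sub h2).abs.tsum_le_tsum hpt hS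
  rw [((hse.mul_left 2).add h2).tsum_sub h1, (hse.mul_left 2).tsum_add h2, tsum_mul_left,
    P.tsum_toReal', P'.tsum_toReal', ← ENNReal.tsum_toReal_eq hfin] at hle
  have := ENNReal.toReal_mono hε hs
  unfold tv
  linarith

/-- expectation -/
noncomputable def expE {X : Type*} (P : PMF X) (f : X → ℝ≥0∞) : ℝ≥0∞ := ∑' x, P x * f x

lemma expE_bind {X Y : Type*} (P : PMF X) (K : X → PMF Y) (f : Y → ℝ≥0∞) :
    expE (P.bind K) f = expE P fun x => expE (K x) f := by
  unfold expE
  simp only [PMF.bind_apply, ← ENNReal.tsum_mul_right, ← ENNReal.tsum_mul_left]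
  rw [ENNReal.tsum_comm]
  simp only [mul_assoc]

lemma expE_pure {X : Type*} (a : X) (f : X → ℝ≥0∞) : expE (PMF.pure a) f = f a := by
  unfold expE
  rw [tsum_eq_single a]
  · simp
  · intro b hb; simp [hb]

lemma expE_map {X Y : Type*} (P : PMF X) (h : X → Y) (f : Y → ℝ≥0∞) :
    expE (P.map h) f = expE P (f ∘ h) := by
  rw [← PMF.bind_pure_comp, expE_bind]
  simp only [Function.comp_def, expE_pure]

lemma expE_const {X : Type*} (P : PMF X) (c : ℝ≥0∞) : expE P (fun _ => c) = c := by
  simp [expE, ENNReal.tsum_mul_right]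

lemma expE_add {X : Type*} (P : PMF X) (f h : X → ℝ≥0∞) :
    expE P (fun x => f x + h x) = expE P f + expE P h := by
  simp [expE, mul_add, ENNReal.tsum_add]

/-- indicator-ness of a point -/
def isInd (x : ℕ × ℕ) : Prop := x.2 % 2 = 0 ∧ 2 ≤ x.2

instance : DecidablePred isInd := fun x => by unfold isInd; infer_instance

lemma expE_ind_iid (p : PMF (ℕ × ℕ)) (m : ℕ) :
    expE (iid p m) (fun S => (Multiset.card (indS S) : ℝ≥0∞)) =
      m * expE p (fun x => if isInd x then 1 else 0) := by
  induction m with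
  | zero => simp [iid, expE_pure, indS]
  | succ n ih =>
    rw [iid, expE_bind]
    have : ∀ s : Multiset (ℕ × ℕ), expE (p.map fun x => x ::ₘ s)
        (fun S => (Multiset.card (indS S) : ℝ≥0∞)) =
        expE p (fun x => if isInd x then 1 else 0) + (Multiset.card (indS s) : ℝ≥0∞) := by
      intro s
      rw [expE_map, ← expE_const p (Multiset.card (indS s) : ℝ≥0∞), ← expE_add]
      congr 1
      funext x
      by_cases hx : isInd x
      · have : indS (x ::ₘ s) = x ::ₘ indS s := Multiset.filter_cons_of_pos _ hx
        simp [hx, this, add_comm]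
      · have : indS (x ::ₘ s) = indS s := Multiset.filter_cons_of_neg _ hx
        simp [hx, this]
    simp only [this]
    rw [expE_add, expE_const, ih]
    push_cast
    ring

lemma card_of_mem_iid {X : Type*} (p : PMF X) (m : ℕ) (S : Multiset X)
    (hS : S ∈ (iid p m).support) : Multiset.card S = m := by
  induction m generalizing S with
  | zero => simp [iid] at hS; simp [hS]
  | succ n ih =>
    simp only [iid, PMF.mem_support_bind_iff, PMF.support_map, Set.mem_image] at hS
    obtain ⟨s, hs, x, -, rfl⟩ := hS
    simp [ih s hs]

/-- bad samples -/
def badS (η : ℝ) : Set (Multiset (ℕ × ℕ)) :=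
  {S | ⌊η * (Multiset.card S : ℕ)⌋₊ < Multiset.card (indS S)}

lemma bad_mass (η : ℝ) (hη : 0 < η) (P : PMF (Multiset (ℕ × ℕ))) (m : ℕ) (hm : 1 ≤ m)
    (hc : ∀ S ∈ P.support, Multiset.card S = m) (r : ℝ≥0∞)
    (hE : expE P (fun S => (Multiset.card (indS S) : ℝ≥0∞)) = m * r) :
    ∑' S, P S * (badS η).indicator 1 S ≤ r / ENNReal.ofReal η := by
  have hm0 : (m : ℝ≥0∞) ≠ 0 := by simp; omega
  have hη0 : ENNReal.ofReal η ≠ 0 := by simpa using hη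
  have key : ∀ S, P S * (badS η).indicator 1 S ≤
      P S * (Multiset.card (indS S) : ℝ≥0∞) * (m * ENNReal.ofReal η)⁻¹ := by
    intro S
    by_cases hS : S ∈ P.support
    · have hcS := hc S hS
      by_cases hb : S ∈ badS η
      · have h1 : η * m ≤ Multiset.card (indS S) := by
          have : ⌊η * (Multiset.card S : ℕ)⌋₊ < Multiset.card (indS S) := hb
          rw [hcS, Nat.floor_lt (by positivity)] at this
          exact this.le
        have h2 : (m : ℝ≥0∞) * ENNReal.ofReal η ≤ Multiset.card (indS S) := by
          have := ENNReal.ofReal_le_ofReal h1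
          rw [ENNReal.ofReal_mul hη.le, ENNReal.ofReal_natCast, ENNReal.ofReal_natCast] at this
          rwa [mul_comm]
        simp only [hb, Set.indicator_of_mem, Pi.one_apply]
        rw [mul_assoc]
        gcongr
        rw [← div_eq_mul_inv, ENNReal.le_div_iff_mul_le]
        · simpa using h2
        · left; exact mul_ne_zero hm0 hη0
        · left; exact ENNReal.mul_ne_top (by simp) (by simp)
      · simp [hb]
    · have : P S = 0 := by simpa [PMF.mem_support_iff] using hS
      simp [this]
  calc _ ≤ ∑' S, P S * (Multiset.card (indS S) : ℝ≥0∞) * (m * ENNReal.ofReal η)⁻¹ :=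
        ENNReal.tsum_le_tsum key
    _ = (m * r) * (m * ENNReal.ofReal η)⁻¹ := by
        rw [ENNReal.tsum_mul_right, ← hE]; rfl
    _ = r / ENNReal.ofReal η := by
        rw [← div_eq_mul_inv, ENNReal.mul_div_mul_left _ _ hm0 (by simp)]
    _ ≤ _ := le_rfl

/-- erase the index from indicator points -/
def eraseI (x : ℕ × ℕ) : ℕ × ℕ := if isInd x then (0, 2) else x

lemma isInd_eraseI (x : ℕ × ℕ) : isInd (eraseI x) ↔ isInd x := by
  unfold eraseI
  split_ifs with h
  · simp [h]; simp [isInd]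
  · rfl

lemma noindS_erase (S : Multiset (ℕ × ℕ)) : noindS (S.map eraseI) = noindS S := by
  induction S using Multiset.induction_on with
  | empty => rfl
  | cons x s ih =>
    rw [Multiset.map_cons]
    by_cases hx : isInd x
    · have h1 : noindS (x ::ₘ s) = noindS s := Multiset.filter_cons_of_neg _ (not_not.2 hx)
      have h2 : noindS (eraseI x ::ₘ s.map eraseI) = noindS (s.map eraseI) :=
        Multiset.filter_cons_of_neg _ (not_not.2 ((isInd_eraseI x).2 hx))
      rw [h1, h2, ih]
    · have h1 : noindS (x ::ₘ s) = x ::ₘ noindS s := Multiset.filter_cons_of_pos _ hx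
      have h2 : noindS (eraseI x ::ₘ s.map eraseI) = eraseI x ::ₘ noindS (s.map eraseI) :=
        Multiset.filter_cons_of_pos _ (mt (isInd_eraseI x).1 hx)
      rw [h1, h2, ih]
      simp [eraseI, hx]

lemma card_ind_add (S : Multiset (ℕ × ℕ)) :
    Multiset.card (indS S) + Multiset.card (noindS S) = Multiset.card S := by
  rw [← Multiset.card_add]
  congr 1
  exact Multiset.filter_add_not _ _

lemma Vsub_erase (η : ℝ) (S : Multiset (ℕ × ℕ)) (hS : S ∉ badS η) :
    Vsub η S = Vsub η (S.map eraseI) := by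
  have hn := noindS_erase S
  have hcard : Multiset.card (S.map eraseI) = Multiset.card S := Multiset.card_map _ _
  have hi : Multiset.card (indS (S.map eraseI)) = Multiset.card (indS S) := by
    have h1 := card_ind_add S
    have h2 := card_ind_add (S.map eraseI)
    rw [hn, hcard] at h2
    omega
  have hg : Multiset.card (indS S) ≤ ⌊η * (Multiset.card S : ℕ)⌋₊ := by
    simpa [badS] using hS
  have hne : Multiset.powersetCard (Multiset.card S - ⌊η * (Multiset.card S : ℕ)⌋₊)
      (noindS S) ≠ 0 := by
    rw [← Multiset.card_pos, Multiset.card_powersetCard]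
    apply Nat.choose_pos
    have := card_ind_add S
    omega
  simp only [Vsub, hcard, hi, hn, hg, if_true, hne, dite_false]

lemma iid_map {X Y : Type*} (p : PMF X) (f : X → Y) (m : ℕ) :
    (iid p m).map (Multiset.map f) = iid (p.map f) m := by
  induction m with
  | zero => simp [iid, PMF.pure_map]
  | succ n ih =>
    rw [iid, iid, ← ih, PMF.map_bind, PMF.bind_map]
    congr 1
    funext s
    rw [PMF.map_comp, Function.comp_apply, PMF.map_comp]
    congr 1
    funext x
    simp

/-- iid tuples -/
noncomputable def iidF {X : Type*} (p : PMF X) : (n : ℕ) → PMF (Fin n → X)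
  | 0 => PMF.pure Fin.elim0
  | n + 1 => (iidF p n).bind fun s => p.map fun x => Fin.cons x s

lemma iidF_apply {X : Type*} (p : PMF X) (n : ℕ) (x : Fin n → X) :
    iidF p n x = ∏ i, p (x i) := by
  induction n with
  | zero =>
    have : x = Fin.elim0 := Subsingleton.elim _ _
    subst this
    simp [iidF]
  | succ n ih =>
    rw [iidF, PMF.bind_apply, tsum_eq_single (Fin.tail x), PMF.map_apply,
      tsum_eq_single (x 0), ih, Fin.prod_univ_succ, mul_comm]
    · simp; rfl
    · intro y hy
      rw [if_neg]
      intro h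
      apply hy
      rw [h]; simp
    · intro s hs
      rw [PMF.map_apply]
      simp only [mul_eq_zero]
      right
      rw [ENNReal.tsum_eq_zero]
      intro y
      rw [if_neg]
      intro h
      apply hs
      rw [h]; simp

/-- product kernel, forgetting order -/
noncomputable def prodK {X Y : Type*} (K : X → PMF Y) : (n : ℕ) → (Fin n → X) → PMF (Multiset Y)
  | 0, _ => PMF.pure 0
  | n + 1, x => (prodK K n (Fin.tail x)).bind fun s => (K (x 0)).map fun y => y ::ₘ s

lemma iid_bind {X Y : Type*} (U : PMF X) (K : X → PMF Y) (m : ℕ) :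
    iid (U.bind K) m = (iidF U m).bind (prodK K m) := by
  induction m with
  | zero => simp [iid, iidF, prodK]
  | succ n ih =>
    rw [iid, ih, iidF, PMF.bind_bind, PMF.bind_bind]
    congr 1
    funext z
    rw [PMF.bind_map]
    simp only [Function.comp_def, prodK, Fin.tail_cons, Fin.cons_zero]
    rw [PMF.bind_comm U]
    congr 1
    funext s
    rw [PMF.map_bind]

lemma fiber_count {m M : ℕ} (t : Fin m → Fin M) (ht : Function.Injective t) (c : Fin m → Bool) :
    2 ^ M ≤ (Finset.univ.filter fun b : Fin M → Bool => ∀ i, b (t i) = c i).card * 2 ^ m := by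
  have h := Fintype.card_le_of_injective
    (fun b : Fin M → Bool =>
      ((⟨Function.extend t c b, fun i => ht.extend_apply c b i⟩ :
        {b : Fin M → Bool // ∀ i, b (t i) = c i}), (fun i => b (t i) : Fin m → Bool))) ?_
  · simpa [Fintype.card_subtype] using h
  · intro b b' hbb
    simp only [Prod.mk.injEq, Subtype.mk.injEq] at hbb
    obtain ⟨h1, h2⟩ := hbb
    funext s
    by_cases hs : ∃ i, t i = s
    · obtain ⟨i, rfl⟩ := hs
      exact congrFun h2 i
    · have := congrFun h1 s
      rwa [Function.extend_apply' _ _ _ hs, Function.extend_apply' _ _ _ hs] at this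

lemma desc_bound (m M : ℕ) (hm : 1 ≤ m) (hM : M = 16 * m ^ 2) :
    15 * M ^ m ≤ 16 * M.descFactorial m := by
  refine le_trans ?_ (Nat.mul_le_mul_left 16 (Nat.pow_sub_le_descFactorial M m))
  have hmM : m ≤ M := by rw [hM]; nlinarith
  have h1 : (M - m) ^ m ≤ (M + 1 - m) ^ m := Nat.pow_le_pow_left (by omega) m
  refine le_trans ?_ (Nat.mul_le_mul_left 16 h1)
  have hmr : (1 : ℝ) ≤ m := by exact_mod_cast hm
  have hMr : (M : ℝ) = 16 * m ^ 2 := by rw [hM]; push_cast; ring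
  have hM0 : (0 : ℝ) < M := by rw [hMr]; positivity
  have hb := one_add_mul_le_pow (a := -((m : ℝ) / M)) (by
    rw [neg_le_neg_iff, div_le_iff₀ hM0]
    have : (m : ℝ) ≤ M := by exact_mod_cast hmM
    linarith) m
  have h2 : 1 + (m : ℝ) * -((m : ℝ) / M) = 15 / 16 := by
    rw [hMr]; field_simp; norm_num
  rw [h2] at hb
  have h3 : (M : ℝ) ^ m * (1 + -((m : ℝ) / M)) ^ m = ((M : ℝ) - m) ^ m := by
    rw [← mul_pow]; congr 1; field_simp; ring
  have h4 : (15 : ℝ) * (M : ℝ) ^ m ≤ 16 * ((M : ℝ) - m) ^ m := by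
    rw [← h3]
    have : (0 : ℝ) < (M : ℝ) ^ m := by positivity
    nlinarith
  have h5 : (((15 * M ^ m : ℕ)) : ℝ) ≤ ((16 * (M - m) ^ m : ℕ) : ℝ) := by
    push_cast [Nat.cast_sub hmM]
    exact h4
  exact_mod_cast h5

open Classical in
lemma noninj_count (m M : ℕ) (hm : 1 ≤ m) (hM : M = 16 * m ^ 2) :
    16 * (Finset.univ.filter fun x : Fin m → Fin M × Bool =>
      ¬ Function.Injective fun i => (x i).1).card ≤ (M * 2) ^ m := by
  have hsum := Finset.card_filter_add_card_filter_not
    (s := (Finset.univ : Finset (Fin m → Fin M × Bool)))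
    (fun x : Fin m → Fin M × Bool => Function.Injective fun i => (x i).1)
  have hcard : (Finset.univ : Finset (Fin m → Fin M × Bool)).card = (M * 2) ^ m := by
    simp
  have h := Fintype.card_le_of_injective
    (fun y : (Fin m ↪ Fin M) × (Fin m → Bool) =>
      (⟨fun i => (y.1 i, y.2 i), y.1.injective⟩ :
        {x : Fin m → Fin M × Bool // Function.Injective fun i => (x i).1})) ?_
  · rw [Fintype.card_prod, Fintype.card_embedding_eq, Fintype.card_subtype] at h
    simp only [Fintype.card_fin, Fintype.card_pi, Fintype.card_bool, Finset.prod_const,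
      Finset.card_univ] at h
    have hd := desc_bound m M hm hM
    have : 15 * (M * 2) ^ m ≤ 16 * (M.descFactorial m * 2 ^ m) := by
      rw [mul_pow]
      nlinarith [Nat.mul_le_mul_right (2 ^ m) hd]
    omega
  · intro y y' hy
    simp only [Subtype.mk.injEq] at hy
    ext i
    · have := congrFun hy i
      simp at this
      simp [this.1]
    · have := congrFun hy i
      simp at this
      simp [this.2]

open Classical in
lemma middle (m M : ℕ) (hm : 1 ≤ m) (hM : M = 16 * m ^ 2) [NeZero M] :
    CloseBy (1 / 16) (iidF (PMF.uniformOfFintype (Fin M × Bool)) m)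
      ((PMF.uniformOfFintype (Fin M → Bool)).bind fun b =>
        iidF ((PMF.uniformOfFintype (Fin M)).map fun t => (t, b t)) m) := by
  have hP : ∀ x, iidF (PMF.uniformOfFintype (Fin M × Bool)) m x = (((M * 2 : ℕ) : ℝ≥0∞) ^ m)⁻¹ := by
    intro x
    rw [iidF_apply]
    simp only [PMF.uniformOfFintype_apply, Fintype.card_prod, Fintype.card_fin, Fintype.card_bool,
      Finset.prod_const, Finset.card_univ]
    rw [ENNReal.inv_pow]
  refine ⟨fun x => if Function.Injective (fun i => (x i).1) then 0 else
    (((M * 2 : ℕ) : ℝ≥0∞) ^ m)⁻¹, fun x => ?_, ?_⟩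
  · rw [hP]
    beta_reduce
    split_ifs with hx
    · rw [add_zero, PMF.bind_apply, tsum_fintype]
      have hU : ∀ (b : Fin M → Bool), (∀ i, b (x i).1 = (x i).2) →
          iidF ((PMF.uniformOfFintype (Fin M)).map fun t => (t, b t)) m x =
            ((M : ℝ≥0∞) ^ m)⁻¹ := by
        intro b hb
        rw [iidF_apply]
        have : ∀ i, ((PMF.uniformOfFintype (Fin M)).map fun t => (t, b t)) (x i) = (M : ℝ≥0∞)⁻¹ := by
          intro i
          rw [PMF.map_apply, tsum_eq_single (x i).1]
          · rw [if_pos]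
            · simp
            · rw [hb i]
          · intro t ht
            rw [if_neg]
            intro h
            apply ht
            rw [h]
        simp only [this, Finset.prod_const, Finset.card_univ, Fintype.card_fin]
        rw [ENNReal.inv_pow]
      have hf := fiber_count (fun i => (x i).1) hx (fun i => (x i).2)
      set F := Finset.univ.filter fun b : Fin M → Bool => ∀ i, b (x i).1 = (x i).2 with hF
      have hf' : (2 : ℝ≥0∞) ^ M ≤ (F.card : ℝ≥0∞) * 2 ^ m := by exact_mod_cast hf
      calc (((M * 2 : ℕ) : ℝ≥0∞) ^ m)⁻¹ = ((2 : ℝ≥0∞) ^ m)⁻¹ * ((M : ℝ≥0∞) ^ m)⁻¹ := by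
            push_cast
            rw [mul_pow, ENNReal.mul_inv (by simp) (by simp), mul_comm]
        _ ≤ (F.card * ((2 : ℝ≥0∞) ^ M)⁻¹) * ((M : ℝ≥0∞) ^ m)⁻¹ := by
            gcongr
            rw [← div_eq_mul_inv, ENNReal.le_div_iff_mul_le (by simp) (by simp), mul_comm,
              ← div_eq_mul_inv]
            exact ENNReal.div_le_of_le_mul hf'
        _ = ∑ b ∈ F, PMF.uniformOfFintype (Fin M → Bool) b *
              iidF ((PMF.uniformOfFintype (Fin M)).map fun t => (t, b t)) m x := by
            rw [Finset.sum_congr rfl (g := fun _ => ((2 : ℝ≥0∞) ^ M)⁻¹ * ((M : ℝ≥0∞) ^ m)⁻¹)]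
            · simp [mul_assoc]
            · intro b hb
              rw [hU b (by simpa [hF] using hb)]
              simp
        _ ≤ _ := Finset.sum_le_sum_of_subset (Finset.subset_univ _)
    · exact le_add_self
  · rw [tsum_fintype]
    have h := noninj_count m M hm hM
    rw [Finset.sum_ite]
    simp only [Finset.sum_const_zero, zero_add, Finset.sum_const, nsmul_eq_mul]
    rw [← div_eq_mul_inv]
    apply ENNReal.div_le_of_le_mul
    rw [mul_comm, mul_one_div, ENNReal.le_div_iff_mul_le (by simp) (by simp), mul_comm]
    exact_mod_cast h

/-- mixture weights -/
noncomputable def mixW (j k : ℕ) (hj : 1 ≤ j) (hjk : j < k) : PMF (Fin 3) :=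
  PMF.ofFintype ![1 - (j : ℝ≥0∞)⁻¹, (j : ℝ≥0∞)⁻¹ - (k : ℝ≥0∞)⁻¹, (k : ℝ≥0∞)⁻¹] (by
    rw [Fin.sum_univ_three]
    simp only [Matrix.cons_val]
    have h1 : (k : ℝ≥0∞)⁻¹ ≤ (j : ℝ≥0∞)⁻¹ := by
      rw [ENNReal.inv_le_inv]; exact_mod_cast hjk.le
    have h2 : (j : ℝ≥0∞)⁻¹ ≤ 1 := by
      rw [ENNReal.inv_le_one]; exact_mod_cast hj
    rw [add_assoc, tsub_add_cancel_of_le h1, tsub_add_cancel_of_le h2])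

/-- the three points -/
def pts (j a : ℕ) (z : ℕ × ℕ) : Fin 3 → ℕ × ℕ := ![(0, 0), (a, 2 * j + 1), z]

/-- the distribution `p` -/
noncomputable def pG {Y : Type} [Fintype Y] [Nonempty Y] (j k : ℕ) (hj : 1 ≤ j) (hjk : j < k)
    (β : Y → ℕ) (i : ℕ) : PMF (ℕ × ℕ) :=
  (PMF.uniformOfFintype Y).bind fun y => (mixW j k hj hjk).map (pts j (β y) (i, 2 * j + 2))

lemma ite_aux {C P : Prop} {_ : Decidable C} {_ : Decidable P} (h : C ↔ P) {w : ℝ≥0∞} :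
    (if C then w else 0) = w * (if P then 1 else 0) := by
  by_cases hP : P
  · rw [if_pos (h.2 hP), if_pos hP, mul_one]
  · rw [if_neg (mt h.1 hP), if_neg hP, mul_zero]

lemma pG_isPijk {Y : Type} [Fintype Y] [Nonempty Y] (j k : ℕ) (hj : 1 ≤ j) (hjk : j < k)
    (β : Y → ℕ) (hβ : Function.Injective β) (i : ℕ) (B : ℕ → Finset ℕ)
    (hBi : B i = Finset.univ.image β) : IsPijk B i j k (pG j k hj hjk β i) := by
  classical
  intro x
  have hc : (B i).card = Fintype.card Y := by
    rw [hBi, Finset.card_image_of_injective _ hβ, Finset.card_univ]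
  have hN : (Fintype.card Y : ℝ≥0∞) ≠ 0 := by simp
  have hN' : (Fintype.card Y : ℝ≥0∞) ≠ ⊤ := by simp
  have hone : (Fintype.card Y : ℝ≥0∞) * (Fintype.card Y : ℝ≥0∞)⁻¹ = 1 :=
    ENNReal.mul_inv_cancel hN hN'
  have hmid : ∑ y : Y, (Fintype.card Y : ℝ≥0∞)⁻¹ * (if x = (β y, 2 * j + 1) then 1 else 0) =
      (if x.1 ∈ B i ∧ x.2 = 2 * j + 1 then (((B i).card : ℝ≥0∞))⁻¹ else 0) := by
    split_ifs with h
    · obtain ⟨h1, h2⟩ := h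
      rw [hBi] at h1
      obtain ⟨y, -, hy⟩ := Finset.mem_image.1 h1
      rw [Finset.sum_eq_single y]
      · rw [if_pos (by ext <;> simp [hy, h2]), hc, mul_one]
      · intro y' _ hne
        rw [if_neg, mul_zero]
        intro h
        exact hne (hβ (by rw [hy, h]))
      · simp
    · apply Finset.sum_eq_zero
      intro y _
      rw [if_neg, mul_zero]
      intro hx
      apply h
      rw [hx, hBi]
      simp
  rw [pG, PMF.bind_apply, tsum_fintype]
  have : ∀ y : Y, PMF.uniformOfFintype Y y *
      ((mixW j k hj hjk).map (pts j (β y) (i, 2 * j + 2))) x =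
      (Fintype.card Y : ℝ≥0∞)⁻¹ * ((1 - ((j : ℝ≥0∞))⁻¹) * (if x = (0, 0) then 1 else 0)
       + ((k : ℝ≥0∞))⁻¹ * (if x = (i, 2 * j + 2) then 1 else 0)) +
      (((j : ℝ≥0∞))⁻¹ - ((k : ℝ≥0∞))⁻¹) *
        ((Fintype.card Y : ℝ≥0∞)⁻¹ * (if x = (β y, 2 * j + 1) then 1 else 0)) := by
    intro y
    rw [PMF.map_apply, tsum_fintype, Fin.sum_univ_three]
    rw [ite_aux (C := x = pts j (β y) (i, 2 * j + 2) 0) (P := x = (0, 0)) Iff.rfl,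
      ite_aux (C := x = pts j (β y) (i, 2 * j + 2) 1) (P := x = (β y, 2 * j + 1)) Iff.rfl,
      ite_aux (C := x = pts j (β y) (i, 2 * j + 2) 2) (P := x = (i, 2 * j + 2)) Iff.rfl]
    simp only [mixW, PMF.ofFintype_apply, PMF.uniformOfFintype_apply, Matrix.cons_val]
    ring
  simp only [this]
  rw [Finset.sum_add_distrib, ← Finset.mul_sum Finset.univ _ (((j : ℝ≥0∞))⁻¹ - ((k : ℝ≥0∞))⁻¹),
    hmid, Finset.sum_const, nsmul_eq_mul,
    Finset.card_univ, ← mul_assoc, hone]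
  ring

lemma pG_ind {Y : Type} [Fintype Y] [Nonempty Y] (j k : ℕ) (hj : 1 ≤ j) (hjk : j < k)
    (β : Y → ℕ) (i : ℕ) :
    expE (pG j k hj hjk β i) (fun x => if isInd x then 1 else 0) = (k : ℝ≥0∞)⁻¹ := by
  rw [pG, expE_bind]
  have : ∀ y : Y, expE ((mixW j k hj hjk).map (pts j (β y) (i, 2 * j + 2)))
      (fun x => if isInd x then 1 else 0) = (k : ℝ≥0∞)⁻¹ := by
    intro y
    rw [expE_map, expE, tsum_fintype, Fin.sum_univ_three]
    have h0 : ¬ isInd (0, 0) := by simp [isInd]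
    have h1 : ¬ isInd (β y, 2 * j + 1) := by simp [isInd]
    have h2 : isInd (i, 2 * j + 2) := by simp [isInd]
    simp [mixW, pts, h0, h1, h2]
  simp only [this, expE_const]

lemma pG_erase {Y : Type} [Fintype Y] [Nonempty Y] (j k : ℕ) (hj : 1 ≤ j) (hjk : j < k)
    (β : Y → ℕ) (i : ℕ) :
    (pG j k hj hjk β i).map eraseI =
      (PMF.uniformOfFintype Y).bind fun y => (mixW j k hj hjk).map (pts j (β y) (0, 2)) := by
  rw [pG, PMF.map_bind]
  congr 1
  funext y
  rw [PMF.map_comp]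
  congr 1
  have h0 : ¬ isInd (0, 0) := by simp [isInd]
  have h1 : ¬ isInd (β y, 2 * j + 1) := by simp [isInd]
  have h2 : isInd (i, 2 * j + 2) := by simp [isInd]
  funext r
  fin_cases r <;> simp [pts, eraseI, h0, h1, h2]

/-- encoding of pairs -/
def enc {M : ℕ} (x : Fin M × Bool) : ℕ := 2 * x.1.val + x.2.toNat

lemma enc_inj {M : ℕ} : Function.Injective (enc (M := M)) := by
  rintro ⟨a, c⟩ ⟨b, d⟩ h
  simp only [enc] at h
  have : a.val = b.val ∧ c = d := by
    cases c <;> cases d <;> simp at h ⊢ <;> omega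
  ext1
  · exact Fin.ext this.1
  · exact this.2

lemma tv_lower (j k M : ℕ) [NeZero M] (hj : 1 ≤ j) (hjk : j < k) (hk : 2 * j ≤ k)
    (B : ℕ → Finset ℕ) (b : Fin M → Bool) (i i' : ℕ) (p q : PMF (ℕ × ℕ))
    (hBi : B i = Finset.univ.image (enc (M := M)))
    (hBi' : B i' = Finset.univ.image fun t : Fin M => enc (t, b t))
    (hp : IsPijk B i j k p) (hq : IsPijk B i' j k q) : 1 / (8 * (j : ℝ)) ≤ tv p q := by
  have hM : (0 : ℝ) < M := by exact_mod_cast Nat.pos_of_ne_zero (NeZero.ne M)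
  have hcard : (B i).card = M * 2 := by
    rw [hBi, Finset.card_image_of_injective _ enc_inj]; simp
  let φ : Fin M → ℕ × ℕ := fun t => (enc (t, !(b t)), 2 * j + 1)
  have hφ : Function.Injective φ := by
    intro t t' h
    have := enc_inj (congrArg Prod.fst h)
    exact congrArg Prod.fst this
  have hpv : ∀ t, (p (φ t)).toReal = ((j : ℝ)⁻¹ - (k : ℝ)⁻¹) * ((M : ℝ) * 2)⁻¹ := by
    intro t
    rw [hp]
    have hm : enc (t, !(b t)) ∈ B i := by rw [hBi]; exact Finset.mem_image_of_mem _ (Finset.mem_univ _)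
    have h1 : (k : ℝ≥0∞)⁻¹ ≤ (j : ℝ≥0∞)⁻¹ := by
      rw [ENNReal.inv_le_inv]; exact_mod_cast hjk.le
    have hj0 : (j : ℝ≥0∞)⁻¹ ≠ ⊤ := by simp; omega
    have e1 : φ t ≠ (0, 0) := by simp [φ]
    have e2 : φ t ≠ (i, 2 * j + 2) := by simp [φ]
    have e3 : (φ t).1 ∈ B i ∧ (φ t).2 = 2 * j + 1 := ⟨hm, rfl⟩
    rw [if_neg e1, if_neg e2, if_pos e3, hcard]
    simp [ENNReal.toReal_sub_of_le h1 hj0]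
  have hqv : ∀ t, (q (φ t)).toReal = 0 := by
    intro t
    rw [hq]
    have e1 : φ t ≠ (0, 0) := by simp [φ]
    have e2 : φ t ≠ (i', 2 * j + 2) := by simp [φ]
    have e3 : ¬ ((φ t).1 ∈ B i' ∧ (φ t).2 = 2 * j + 1) := by
      rintro ⟨h, -⟩
      rw [hBi'] at h
      obtain ⟨s, -, hs⟩ := Finset.mem_image.1 h
      have := enc_inj hs
      simp only [Prod.mk.injEq] at this
      obtain ⟨rfl, h⟩ := this
      simp at h
    rw [if_neg e1, if_neg e2, if_neg e3]
    simp
  have hS : Summable fun x => |(p x).toReal - (q x).toReal| :=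
    (p.summable_toReal'.sub q.summable_toReal').abs
  have hle := hS.sum_le_tsum (Finset.univ.map ⟨φ, hφ⟩) (fun _ _ => abs_nonneg _)
  rw [Finset.sum_map] at hle
  simp only [Function.Embedding.coeFn_mk, hpv, hqv, sub_zero, Finset.sum_const, Finset.card_univ,
    Fintype.card_fin, nsmul_eq_mul] at hle
  have hj0 : (0 : ℝ) < j := by exact_mod_cast hj
  have hk0 : (0 : ℝ) < k := by exact_mod_cast (by omega : 0 < k)
  have hinv : (k : ℝ)⁻¹ ≤ (j : ℝ)⁻¹ / 2 := by
    rw [inv_le_comm₀ hk0 (by positivity)]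
    have : (2 * j : ℝ) ≤ k := by exact_mod_cast hk
    simpa [mul_comm] using this
  have h5 : (j : ℝ)⁻¹ / 4 ≤ (M : ℝ) * |((j : ℝ)⁻¹ - (k : ℝ)⁻¹) * ((M : ℝ) * 2)⁻¹| := by
    have h6 := le_abs_self (((j : ℝ)⁻¹ - (k : ℝ)⁻¹) * ((M : ℝ) * 2)⁻¹)
    have h7 := mul_le_mul_of_nonneg_left h6 hM.le
    refine le_trans ?_ h7
    have : (M : ℝ) * (((j : ℝ)⁻¹ - (k : ℝ)⁻¹) * ((M : ℝ) * 2)⁻¹) =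
      ((j : ℝ)⁻¹ - (k : ℝ)⁻¹) / 2 := by field_simp
    rw [this]
    linarith
  have h8 : 1 / (8 * (j : ℝ)) = (j : ℝ)⁻¹ / 8 := by field_simp
  rw [h8, tv]
  linarith

theorem stmt6 (B : ℕ → Finset ℕ) (hB : Function.Surjective B)
    (g : ℕ → ℕ) (hg : Superlinear g) (α : ℝ) (hα : 1 ≤ α) :
    ∃ η γ' : ℝ, η ∈ Set.Ioo (0 : ℝ) 1 ∧ γ' ∈ Set.Ioo (0 : ℝ) 1 ∧
      ∀ m : ℕ, 1 ≤ m →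
        ∃ p ∈ Cg B g, ∃ Q : PMF (PMF (ℕ × ℕ)), Q.support ⊆ Cg B g ∧
          (∀ q ∈ Q.support, 4 * α * η + 4 * γ' ≤ tv p q) ∧
          tv (advPush (Vsub η) (iid p m)) (advPush (Vsub η) (metaSample Q m)) ≤ 1 / 8 := by
  obtain ⟨j, hj, hgj⟩ : ∃ j : ℕ, 1 ≤ j ∧ 2048 * α ≤ (g j : ℝ) / j := by
    have h1 := hg.eventually_ge_atTop (2048 * α)
    obtain ⟨j, h⟩ := (h1.and (Filter.eventually_ge_atTop 1)).exists
    exact ⟨j, h.2, h.1⟩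
  have hj0 : (0 : ℝ) < j := by exact_mod_cast hj
  have hj1 : (1 : ℝ) ≤ j := by exact_mod_cast hj
  rw [le_div_iff₀ hj0] at hgj
  have hk : 2 * j ≤ g j := by
    have : (2 * j : ℝ) ≤ g j := by nlinarith
    exact_mod_cast this
  have hjk : j < g j := by omega
  have hαj : 1 ≤ α * j := by nlinarith
  have hη0 : 0 < 1 / (64 * (α * j)) := by positivity
  refine ⟨1 / (64 * (α * j)), 1 / (64 * j), ⟨hη0, ?_⟩, ⟨by positivity, ?_⟩, ?_⟩
  · rw [div_lt_one (by positivity)]; linarith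
  · rw [div_lt_one (by positivity)]; linarith
  intro m hm
  set η : ℝ := 1 / (64 * (α * j)) with hη
  obtain ⟨M, hM⟩ : ∃ M, M = 16 * m ^ 2 := ⟨_, rfl⟩
  have : NeZero M := ⟨by rw [hM]; positivity⟩
  obtain ⟨i, hi⟩ := hB (Finset.univ.image (enc (M := M)))
  choose ib hib using fun b : Fin M → Bool => hB (Finset.univ.image fun t : Fin M => enc (t, b t))
  have hinj : ∀ b : Fin M → Bool, Function.Injective fun t : Fin M => enc (t, b t) :=
    fun b t t' h => congrArg Prod.fst (enc_inj h)
  let p := pG j (g j) hj hjk (enc (M := M)) i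
  let q : (Fin M → Bool) → PMF (ℕ × ℕ) := fun b =>
    pG j (g j) hj hjk (fun t : Fin M => enc (t, b t)) (ib b)
  have hp : IsPijk B i j (g j) p := pG_isPijk j (g j) hj hjk _ enc_inj i B hi
  have hq : ∀ b, IsPijk B (ib b) j (g j) (q b) := fun b =>
    pG_isPijk j (g j) hj hjk _ (hinj b) (ib b) B (hib b)
  have hsupp : ∀ r ∈ ((PMF.uniformOfFintype (Fin M → Bool)).map q).support, ∃ b, r = q b := by
    intro r hr
    rw [PMF.support_map] at hr
    obtain ⟨b, -, rfl⟩ := hr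
    exact ⟨b, rfl⟩
  refine ⟨p, ⟨i, j, hj, hjk, ?_, hp⟩, (PMF.uniformOfFintype (Fin M → Bool)).map q, ?_, ?_, ?_⟩
  · rw [hi]; exact Finset.univ_nonempty.image _
  · intro r hr
    obtain ⟨b, rfl⟩ := hsupp r hr
    refine ⟨ib b, j, hj, hjk, ?_, hq b⟩
    rw [hib]; exact Finset.univ_nonempty.image _
  · intro r hr
    obtain ⟨b, rfl⟩ := hsupp r hr
    refine le_trans (le_of_eq ?_) (tv_lower j (g j) M hj hjk hk B b i (ib b) p (q b) hi (hib b)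
      hp (hq b))
    rw [hη]; field_simp; norm_num
  · have hmass : ((g j : ℝ≥0∞))⁻¹ / ENNReal.ofReal η ≤ 1 / 32 := by
      have hg0 : (0 : ℝ) < g j := by exact_mod_cast (by omega : 0 < g j)
      have h1 : ((g j : ℝ≥0∞))⁻¹ / ENNReal.ofReal η = ENNReal.ofReal ((g j : ℝ)⁻¹ / η) := by
        rw [ENNReal.ofReal_div_of_pos hη0, ENNReal.ofReal_inv_of_pos hg0, ENNReal.ofReal_natCast]
      have h2 : (1 / 32 : ℝ≥0∞) = ENNReal.ofReal (1 / 32) := by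
        rw [ENNReal.ofReal_div_of_pos (by norm_num)]; simp
      rw [h1, h2]
      apply ENNReal.ofReal_le_ofReal
      rw [hη, div_le_iff₀ hη0, inv_eq_one_div, div_mul_div_comm, one_mul,
        div_le_div_iff₀ hg0 (by positivity)]
      linarith
    set Q := (PMF.uniformOfFintype (Fin M → Bool)).map q with hQ
    have hmeta : metaSample Q m =
        (PMF.uniformOfFintype (Fin M → Bool)).bind fun b => iid (q b) m := by
      rw [metaSample, hQ, PMF.bind_map]; rfl
    -- first step: erase indices in the sample from `p`
    have s1 : CloseBy (1 / 32) ((iid p m).bind (Vsub η))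
        (((iid p m).map (Multiset.map eraseI)).bind (Vsub η)) := by
      rw [PMF.bind_map]
      obtain ⟨e, he, hs⟩ := CloseBy.bind_left (iid p m) (Vsub η)
        (Vsub η ∘ Multiset.map eraseI) (badS η) (fun S hS => Vsub_erase η S hS)
      refine ⟨e, he, hs.trans (le_trans ?_ hmass)⟩
      refine bad_mass η hη0 _ m hm (card_of_mem_iid p m) _ ?_
      rw [expE_ind_iid, pG_ind]
    have s3 : CloseBy (1 / 32) (((metaSample Q m).map (Multiset.map eraseI)).bind (Vsub η))
        ((metaSample Q m).bind (Vsub η)) := by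
      rw [PMF.bind_map]
      obtain ⟨e, he, hs⟩ := CloseBy.bind_left (metaSample Q m) (Vsub η ∘ Multiset.map eraseI)
        (Vsub η) (badS η) (fun S hS => (Vsub_erase η S hS).symm)
      refine ⟨e, he, hs.trans (le_trans ?_ hmass)⟩
      refine bad_mass η hη0 _ m hm ?_ _ ?_
      · intro S hS
        rw [metaSample, PMF.mem_support_bind_iff] at hS
        obtain ⟨r, -, hr⟩ := hS
        exact card_of_mem_iid r m S hr
      · rw [hmeta, expE_bind]
        simp only [expE_ind_iid, q, pG_ind, expE_const]
    let K : Fin M × Bool → PMF (ℕ × ℕ) := fun x => (mixW j (g j) hj hjk).map (pts j (enc x) (0, 2))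
    have e1 : (iid p m).map (Multiset.map eraseI) =
        (iidF (PMF.uniformOfFintype (Fin M × Bool)) m).bind (prodK K m) := by
      rw [iid_map, pG_erase, iid_bind]
    have e2 : (metaSample Q m).map (Multiset.map eraseI) =
        ((PMF.uniformOfFintype (Fin M → Bool)).bind fun b =>
          iidF ((PMF.uniformOfFintype (Fin M)).map fun t => (t, b t)) m).bind (prodK K m) := by
      rw [hmeta, PMF.map_bind, PMF.bind_bind]
      congr 1
      funext b
      rw [iid_map, pG_erase, ← iid_bind, PMF.bind_map]
      rfl
    have s2 : CloseBy (1 / 16) (((iid p m).map (Multiset.map eraseI)).bind (Vsub η))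
        (((metaSample Q m).map (Multiset.map eraseI)).bind (Vsub η)) := by
      rw [e1, e2]
      exact ((middle m M hm hM).bind _).bind _
    have hall := (s1.trans s2).trans s3
    have hfin : (1 / 32 + 1 / 16 + 1 / 32 : ℝ≥0∞) ≠ ⊤ := by
      simp
    refine (hall.tv_le hfin).trans (le_of_eq ?_)
    rw [ENNReal.toReal_add (by simp) (by simp), ENNReal.toReal_add (by simp) (by simp)]
    simp
    norm_num
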